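/- arXiv:2306.10810 — 2 statements merged into one kernel-verified Lean document; each statement's English description precedes it below -/
import Mathlib

section
/- Assume additionally that L > 0. Then for every matrix X ∈ T̃(l,u,l',u',L,U) there exist nonnegative vectors t ∈ ℝ^n, t' ∈ ℝ^m and a nonnegative m×n matrix R such that: Σ_{j=1}^n t_j = 1; Σ_{i=1}^m t'_i = 1; r_{ij} = t'_i · t_j for all i, j; x_{ij} = r_{ij} · Σ_{i'=1}^m Σ_{j'=1}^n x_{i'j'} for all i, j; l'_j/U ≤ t_j ≤ u'_j/L for all j; l_i/U ≤ t'_i ≤ u_i/L for all i; l_i t_j ≤ u'_j t'_i for all i, j; and l'_j t'_i ≤ u_i t_j for all i, j. -/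
/-!
Writing `r i`, `c j` for the row and column sums of `X` and `S` for its total, a matrix of rank at
most one factors as `X i j = w i * v j`, whence `X i j * S = r i * c j`. As `S ≥ L > 0`, the
normalized margins `t j = c j / S` and `t' i = r i / S` satisfy `X i j = t' i * t j * S`, and all
the inequalities follow by comparing `r`, `c`, `S` with their bounds.
-/

/-- A matrix of rank at most one is an outer product: all its columns are multiples of a single
vector spanning the column space. -/
lemma exists_outer_of_rank_le_one {m n : ℕ} (X : Matrix (Fin m) (Fin n) ℝ) (h : X.rank ≤ 1) :
    ∃ (w : Fin m → ℝ) (v : Fin n → ℝ), ∀ i j, X i j = w i * v j := by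
  obtain ⟨w, hw⟩ := finrank_le_one_iff.mp h
  choose c hc using fun j => hw ⟨X.mulVecLin (Pi.single j 1), LinearMap.mem_range_self _ _⟩
  refine ⟨w.1, c, fun i j => ?_⟩
  have h1 := congrFun (congrArg Subtype.val (hc j)) i
  simp at h1
  rw [← h1, mul_comm]

lemma mul_total_eq_of_rank_le_one {m n : ℕ} (X : Matrix (Fin m) (Fin n) ℝ) (h : X.rank ≤ 1)
    (i : Fin m) (j : Fin n) :
    X i j * ∑ i', ∑ j', X i' j' = (∑ j', X i j') * ∑ i', X i' j := by
  obtain ⟨w, v, hwv⟩ := exists_outer_of_rank_le_one X h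
  simp only [hwv, ← Finset.mul_sum, ← Finset.sum_mul]
  ring

theorem Ttilde_subset_RLT_set
    (m n : ℕ) (hm : 0 < m) (hn : 0 < n)
    (l u : Fin m → ℝ) (l' u' : Fin n → ℝ) (L U : ℝ)
    (hl : ∀ i, 0 ≤ l i) (hlu : ∀ i, l i ≤ u i)
    (hl' : ∀ j, 0 ≤ l' j) (hlu' : ∀ j, l' j ≤ u' j)
    (hL : 0 ≤ L) (hLU : L ≤ U) (hLpos : 0 < L)
    (X : Matrix (Fin m) (Fin n) ℝ)
    (hX : (∀ i j, 0 ≤ X i j) ∧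
      (∀ i, l i ≤ ∑ j, X i j ∧ ∑ j, X i j ≤ u i) ∧
      (∀ j, l' j ≤ ∑ i, X i j ∧ ∑ i, X i j ≤ u' j) ∧
      (L ≤ ∑ i, ∑ j, X i j ∧ ∑ i, ∑ j, X i j ≤ U) ∧
      X.rank ≤ 1) :
    ∃ (t : Fin n → ℝ) (t' : Fin m → ℝ) (R : Matrix (Fin m) (Fin n) ℝ),
      (∀ j, 0 ≤ t j) ∧ (∀ i, 0 ≤ t' i) ∧ (∀ i j, 0 ≤ R i j) ∧
      (∑ j, t j = 1) ∧ (∑ i, t' i = 1) ∧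
      (∀ i j, R i j = t' i * t j) ∧
      (∀ i j, X i j = R i j * ∑ i', ∑ j', X i' j') ∧
      (∀ j, l' j / U ≤ t j ∧ t j ≤ u' j / L) ∧
      (∀ i, l i / U ≤ t' i ∧ t' i ≤ u i / L) ∧
      (∀ i j, l i * t j ≤ u' j * t' i) ∧
      (∀ i j, l' j * t' i ≤ u i * t j) := by
  obtain ⟨h0, hr, hc, ⟨hSL, hSU⟩, hrk⟩ := hX
  have key := mul_total_eq_of_rank_le_one X hrk
  have hcomm : ∑ j, ∑ i, X i j = ∑ i, ∑ j, X i j := Finset.sum_comm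
  have r0 : ∀ i, 0 ≤ ∑ j, X i j := fun i => Finset.sum_nonneg fun j _ => h0 i j
  have c0 : ∀ j, 0 ≤ ∑ i, X i j := fun j => Finset.sum_nonneg fun i _ => h0 i j
  set S := ∑ i, ∑ j, X i j with hS
  have hSpos : 0 < S := hLpos.trans_le hSL
  refine ⟨fun j => (∑ i, X i j) / S, fun i => (∑ j, X i j) / S,
    fun i j => (∑ j, X i j) / S * ((∑ i, X i j) / S), fun j => div_nonneg (c0 j) hSpos.le,
    fun i => div_nonneg (r0 i) hSpos.le,
    fun i j => mul_nonneg (div_nonneg (r0 i) hSpos.le) (div_nonneg (c0 j) hSpos.le),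
    ?_, ?_, fun _ _ => rfl, fun i j => ?_, fun j => ⟨?_, ?_⟩, fun i => ⟨?_, ?_⟩,
    fun i j => ?_, fun i j => ?_⟩
  · rw [← Finset.sum_div, hcomm, div_self hSpos.ne']
  · rw [← Finset.sum_div, ← hS, div_self hSpos.ne']
  · have := key i j
    field_simp
    linarith
  · exact div_le_div₀ (c0 j) (hc j).1 hSpos hSU
  · exact div_le_div₀ ((hl' j).trans (hlu' j)) (hc j).2 hLpos hSL
  · exact div_le_div₀ (r0 i) (hr i).1 hSpos hSU
  · exact div_le_div₀ ((hl i).trans (hlu i)) (hr i).2 hLpos hSL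
  -- The last two bounds pass through `r i * c j / S`.
  · rw [← mul_div_assoc, ← mul_div_assoc, mul_comm (u' j)]
    exact div_le_div_of_nonneg_right (mul_le_mul (hr i).1 (hc j).2 (c0 j) (r0 i)) hSpos.le
  · rw [← mul_div_assoc, ← mul_div_assoc, mul_comm (u i)]
    exact div_le_div_of_nonneg_right (mul_le_mul (hc j).1 (hr i).2 (r0 i) (c0 j)) hSpos.le
end

section
/- Assume additionally that L > 0. Then every matrix X ∈ T̃(l,u,l',u',L,U) satisfies, for all indices i, j, the four McCormick-type valid inequalities (writing R_i = Σ_{j'=1}^n x_{ij'}, C_j = Σ_{i'=1}^m x_{i'j}, and S = Σ_{i'=1}^m Σ_{j'=1}^n x_{i'j'}): (1) x_{ij} ≥ (l_i/U)·C_j + (l'_j/U)·R_i − (l_i l'_j/U²)·S; (2) x_{ij} ≤ (l_i/U)·C_j + (u'_j/L)·R_i − (l_i u'_j/(U·L))·S; (3) x_{ij} ≤ (u_i/L)·C_j + (l'_j/U)·R_i − (u_i l'_j/(U·L))·S; (4) x_{ij} ≥ (u_i/L)·C_j + (u'_j/L)·R_i − (u_i u'_j/L²)·S. -/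
/-!
A matrix of rank at most one has the form `X i j = a i * b j`, so `x * S = R * C`, where `x` is an
entry, `R` and `C` are its row and column sums, and `S` is the total sum. If `R - p * S` and
`C - q * S` have known signs, then so does their product
`(R - p * S) * (C - q * S) = S * (x - p * C - q * R + p * q * S)`, and `S ≥ L > 0` can be cancelled.
The margin and total bounds give these signs for `p ∈ {l i / U, u i / L}` and
`q ∈ {l' j / U, u' j / L}`, and the four choices are the four inequalities.
-/

lemma exists_mul_of_rank_le_one {m n : ℕ} (X : Matrix (Fin m) (Fin n) ℝ) (h : X.rank ≤ 1) :
    ∃ (a : Fin m → ℝ) (b : Fin n → ℝ), ∀ i j, X i j = a i * b j := by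
  rw [Matrix.rank_eq_finrank_span_cols, finrank_le_one_iff] at h
  obtain ⟨v, hv⟩ := h
  choose b hb using fun j => hv ⟨X.col j, Submodule.subset_span ⟨j, rfl⟩⟩
  refine ⟨v.1, b, fun i j => ?_⟩
  have := congrFun (congrArg Subtype.val (hb j)) i
  simpa [mul_comm] using this.symm

/-- Every 2 × 2 minor `x i j * x i' j' - x i j' * x i' j` vanishes; this is the sum of these
identities over all `i'`, `j'`. -/
lemma entry_mul_total_of_rank_le_one {m n : ℕ} (X : Matrix (Fin m) (Fin n) ℝ) (h : X.rank ≤ 1)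
    (i : Fin m) (j : Fin n) :
    X i j * (∑ i', ∑ j', X i' j') = (∑ j', X i j') * (∑ i', X i' j) := by
  obtain ⟨a, b, hab⟩ := exists_mul_of_rank_le_one X h
  simp only [hab, ← Finset.mul_sum, ← Finset.sum_mul]
  ring

lemma div_mul_le_of_le {l U S R : ℝ} (hl : 0 ≤ l) (hU : 0 < U) (hS : S ≤ U) (hR : l ≤ R) :
    l / U * S ≤ R := by
  rw [div_mul_eq_mul_div, div_le_iff₀ hU]
  nlinarith

lemma le_div_mul_of_le {u L S R : ℝ} (hu : 0 ≤ u) (hL : 0 < L) (hS : L ≤ S) (hR : R ≤ u) :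
    R ≤ u / L * S := by
  rw [div_mul_eq_mul_div, le_div_iff₀ hL]
  nlinarith

theorem Ttilde_mccormick_valid_inequalities
    (m n : ℕ) (hm : 0 < m) (hn : 0 < n)
    (l u : Fin m → ℝ) (l' u' : Fin n → ℝ) (L U : ℝ)
    (hl : ∀ i, 0 ≤ l i) (hlu : ∀ i, l i ≤ u i)
    (hl' : ∀ j, 0 ≤ l' j) (hlu' : ∀ j, l' j ≤ u' j)
    (hL : 0 ≤ L) (hLU : L ≤ U) (hLpos : 0 < L)
    (X : Matrix (Fin m) (Fin n) ℝ)
    (hX : (∀ i j, 0 ≤ X i j) ∧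
      (∀ i, l i ≤ ∑ j, X i j ∧ ∑ j, X i j ≤ u i) ∧
      (∀ j, l' j ≤ ∑ i, X i j ∧ ∑ i, X i j ≤ u' j) ∧
      (L ≤ ∑ i, ∑ j, X i j ∧ ∑ i, ∑ j, X i j ≤ U) ∧
      X.rank ≤ 1) :
    ∀ i j,
      (X i j ≥ (l i / U) * (∑ i', X i' j) + (l' j / U) * (∑ j', X i j')
        - (l i * l' j / U ^ 2) * (∑ i', ∑ j', X i' j')) ∧
      (X i j ≤ (l i / U) * (∑ i', X i' j) + (u' j / L) * (∑ j', X i j')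
        - (l i * u' j / (U * L)) * (∑ i', ∑ j', X i' j')) ∧
      (X i j ≤ (u i / L) * (∑ i', X i' j) + (l' j / U) * (∑ j', X i j')
        - (u i * l' j / (U * L)) * (∑ i', ∑ j', X i' j')) ∧
      (X i j ≥ (u i / L) * (∑ i', X i' j) + (u' j / L) * (∑ j', X i j')
        - (u i * u' j / L ^ 2) * (∑ i', ∑ j', X i' j')) := by
  intro i j
  obtain ⟨-, hrow, hcol, ⟨hLS, hSU⟩, hrank⟩ := hX
  have key := entry_mul_total_of_rank_le_one X hrank i j
  obtain ⟨hr1, hr2⟩ := hrow i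
  obtain ⟨hc1, hc2⟩ := hcol j
  generalize (∑ i', ∑ j', X i' j') = S at *
  generalize (∑ j', X i j') = R at *
  generalize (∑ i', X i' j) = C at *
  generalize X i j = x at *
  have hS : 0 < S := hLpos.trans_le hLS
  have hU : 0 < U := hLpos.trans_le hLU
  have p1 := div_mul_le_of_le (hl i) hU hSU hr1
  have q1 := div_mul_le_of_le (hl' j) hU hSU hc1
  have p2 := le_div_mul_of_le ((hl i).trans (hlu i)) hLpos hLS hr2
  have q2 := le_div_mul_of_le ((hl' j).trans (hlu' j)) hLpos hLS hc2
  have e1 : l i * l' j / U ^ 2 = (l i / U) * (l' j / U) := by rw [div_mul_div_comm, sq]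
  have e2 : l i * u' j / (U * L) = (l i / U) * (u' j / L) := by rw [div_mul_div_comm]
  have e3 : u i * l' j / (U * L) = (u i / L) * (l' j / U) := by
    rw [div_mul_div_comm, mul_comm L U]
  have e4 : u i * u' j / L ^ 2 = (u i / L) * (u' j / L) := by rw [div_mul_div_comm, sq]
  rw [e1, e2, e3, e4]
  have fac : ∀ p q : ℝ,
      (R - p * S) * (C - q * S) = S * (x - (p * C + q * R - p * q * S)) := by
    intro p q
    linear_combination -key
  refine ⟨?_, ?_, ?_, ?_⟩
  · have h := mul_nonneg (sub_nonneg.2 p1) (sub_nonneg.2 q1)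
    rw [fac] at h
    exact sub_nonneg.1 (nonneg_of_mul_nonneg_right h hS)
  · have h := mul_nonpos_of_nonneg_of_nonpos (sub_nonneg.2 p1) (sub_nonpos.2 q2)
    rw [fac] at h
    exact sub_nonpos.1 (nonpos_of_mul_nonpos_right h hS)
  · have h := mul_nonpos_of_nonpos_of_nonneg (sub_nonpos.2 p2) (sub_nonneg.2 q1)
    rw [fac] at h
    exact sub_nonpos.1 (nonpos_of_mul_nonpos_right h hS)
  · have h := mul_nonneg_of_nonpos_of_nonpos (sub_nonpos.2 p2) (sub_nonpos.2 q2)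
    rw [fac] at h
    exact sub_nonneg.1 (nonneg_of_mul_nonneg_right h hS)
end
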